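/- Let L be a real symmetric N×N positive semidefinite matrix, σ > 0, Θ = L + (1/σ²) I, X ∈ ℝ^{N×M}, and e ∈ ℝ^N. Define F(w) = log det(Θ + w · e eᵀ) − (1/M) Tr(Xᵀ (Θ + w · e eᵀ) X). Then F′(0) = 0 if and only if eᵀ Θ⁻¹ e = (1/M) ‖Xᵀ e‖₂², i.e., the stationarity condition holds exactly when the spectral embedding distance z^{emb} = eᵀ Θ⁻¹ e matches the data distance z^{data} = ‖Xᵀ e‖₂²/M along direction e. -/

import Mathlib

open Matrix

/-!
The function `F` splits into a log-determinant and an affine function of `w`. Factoring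
`det (A + w B) = det A * det (1 + w A⁻¹ B)` reduces the derivative of the first to the linear
coefficient of `det (1 + w C)`, which is `tr C`; hence moving `Θ` in a direction `B` gives
`F'(0) = tr (Θ⁻¹ B) - (1/M) tr (Xᵀ B X)`. For `B = e eᵀ` both traces are dot products.
-/

section Determinant

variable {n 𝕜 : Type*} [Fintype n] [DecidableEq n] [NontriviallyNormedField 𝕜]

lemma hasDerivAt_det_one_add_smul (B : Matrix n n 𝕜) :
    HasDerivAt (fun t : 𝕜 => (1 + t • B).det) B.trace 0 := by
  have h := (det (1 + (Polynomial.X : Polynomial 𝕜) • B.map Polynomial.C)).hasDerivAt 0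
  rw [derivative_det_one_add_X_smul] at h
  refine h.congr_of_eventuallyEq (.of_forall fun t => ?_)
  simp [eval_det, ← smul_eq_mul_diagonal]

lemma hasDerivAt_det_add_smul {A : Matrix n n 𝕜} (hA : A.det ≠ 0) (B : Matrix n n 𝕜) :
    HasDerivAt (fun t : 𝕜 => (A + t • B).det) (A.det * (A⁻¹ * B).trace) 0 := by
  have det_factor (t : 𝕜) : (A + t • B).det = A.det * (1 + t • (A⁻¹ * B)).det := by
    rw [← det_mul, mul_add, mul_one, mul_smul_comm, mul_nonsing_inv_cancel_left _ _ hA.isUnit]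
  simpa only [det_factor] using (hasDerivAt_det_one_add_smul (A⁻¹ * B)).const_mul A.det

end Determinant

lemma hasDerivAt_log_det_add_smul {n : Type*} [Fintype n] [DecidableEq n] {A : Matrix n n ℝ}
    (hA : A.det ≠ 0) (B : Matrix n n ℝ) :
    HasDerivAt (fun t : ℝ => Real.log (A + t • B).det) (A⁻¹ * B).trace 0 := by
  simpa [mul_div_cancel_left₀ _ hA] using
    (hasDerivAt_det_add_smul hA B).log (by simpa using hA)

lemma hasDerivAt_trace_mul_add_smul_mul {m n p 𝕜 : Type*} [Fintype m] [Fintype n] [Fintype p]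
    [NontriviallyNormedField 𝕜] (P : Matrix m n 𝕜) (A B : Matrix n p 𝕜) (Q : Matrix p m 𝕜)
    (t : 𝕜) : HasDerivAt (fun s : 𝕜 => (P * (A + s • B) * Q).trace) (P * B * Q).trace t := by
  have trace_affine (s : 𝕜) :
      (P * (A + s • B) * Q).trace = (P * A * Q).trace + s * (P * B * Q).trace := by
    simp [Matrix.mul_add, Matrix.add_mul]
  simpa only [trace_affine, one_mul] using
    ((hasDerivAt_id' t).mul_const (P * B * Q).trace).const_add (P * A * Q).trace

theorem graph_learning_stationarity_iff_general {m n : Type*} [Fintype m] [Fintype n]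
    [DecidableEq n] {Θ : Matrix n n ℝ} (hΘ : 0 < Θ.det) (B : Matrix n n ℝ) (X : Matrix n m ℝ)
    (c : ℝ) :
    deriv (fun w : ℝ => Real.log (Θ + w • B).det - c * (Xᵀ * (Θ + w • B) * X).trace) 0 = 0 ↔
      (Θ⁻¹ * B).trace = c * (Xᵀ * B * X).trace := by
  have hasDerivAt_objective := (hasDerivAt_log_det_add_smul hΘ.ne' B).sub
    ((hasDerivAt_trace_mul_add_smul_mul Xᵀ Θ B X 0).const_mul c)
  exact (Eq.congr_left hasDerivAt_objective.deriv).trans sub_eq_zero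

/-- With `Θ = L + (1/σ²) I` for `L` symmetric PSD and `σ > 0`, and
`F(w) = log det(Θ + w e eᵀ) - (1/M) Tr(Xᵀ (Θ + w e eᵀ) X)`, the stationarity
condition `F'(0) = 0` holds if and only if the spectral embedding distance
`eᵀ Θ⁻¹ e` matches the data distance `‖Xᵀ e‖₂²/M`. -/
theorem graph_learning_stationarity_iff
    {N M : ℕ} (L : Matrix (Fin N) (Fin N) ℝ) (hsymm : L.IsSymm) (hpsd : L.PosSemidef)
    (σ : ℝ) (hσ : 0 < σ)
    (Θ : Matrix (Fin N) (Fin N) ℝ) (hΘ : Θ = L + (1 / σ ^ 2) • 1)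
    (X : Matrix (Fin N) (Fin M) ℝ) (e : Fin N → ℝ)
    (F : ℝ → ℝ)
    (hF : F = fun w : ℝ =>
      Real.log (Θ + w • Matrix.vecMulVec e e).det
        - (1 / (M : ℝ)) * Matrix.trace (Xᵀ * (Θ + w • Matrix.vecMulVec e e) * X)) :
    deriv F 0 = 0 ↔
      e ⬝ᵥ (Θ⁻¹ *ᵥ e) = (1 / (M : ℝ)) * ((Xᵀ *ᵥ e) ⬝ᵥ (Xᵀ *ᵥ e)) := by
  have hΘ_pos : Θ.PosDef := hΘ ▸ .posSemidef_add hpsd (PosDef.one.smul (by positivity))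
  rw [hF, graph_learning_stationarity_iff_general hΘ_pos.det_pos, mul_vecMulVec, mul_vecMulVec,
    vecMulVec_mul, trace_vecMulVec, trace_vecMulVec, dotProduct_comm, mulVec_transpose]
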